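/- An A-module M is a-reduced (i.e., for all m ∈ M, a²m = 0 implies am = 0, where a ranges over the ideal) if and only if the ideal a annihilates the a-torsion submodule Γ_a(M) = {m ∈ M : aᵏm = 0 for some k}. -/

import Mathlib

/-!
If `M` is `a`-reduced and `a ^ (k + 2)` kills `m`, then for every `y ∈ a ^ k` the element `y • m` is
killed by `a ^ 2`, hence by `a`; as the products `y * x` with `y ∈ a ^ k`, `x ∈ a` generate
`a ^ (k + 1)`, already `a ^ (k + 1)` kills `m`. Descending, `a` kills `m`. Thus every term of the
supremum defining `torsionGamma a M` lies in the `a`-torsion submodule. The converse holds because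
the `a ^ 2`-torsion is one of these terms.
-/

/-- `M` is `a`-reduced (ideal version): `a² • m = 0` implies `a • m = 0`. -/
def IsAReducedIdeal {A : Type*} [CommRing A] (a : Ideal A)
    (M : Type*) [AddCommGroup M] [Module A M] : Prop :=
  ∀ m : M, (∀ x ∈ a ^ 2, x • m = 0) → ∀ x ∈ a, x • m = 0

/-- The `a`-power-torsion submodule `Γ_a(M)`. -/
noncomputable def torsionGamma {A : Type*} [CommRing A] (a : Ideal A)
    (M : Type*) [AddCommGroup M] [Module A M] : Submodule A M :=
  ⨆ k : ℕ, Submodule.torsionBySet A M ((a ^ (k + 1) : Ideal A) : Set A)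

theorem IsAReducedIdeal.smul_eq_zero_of_pow {A : Type*} [CommRing A] {a : Ideal A}
    {M : Type*} [AddCommGroup M] [Module A M] (h : IsAReducedIdeal a M) (k : ℕ) {m : M}
    (hm : ∀ x ∈ a ^ (k + 1), x • m = 0) : ∀ x ∈ a, x • m = 0 := by
  induction k with
  | zero => simpa using hm
  | succ k ih =>
    refine ih fun z hz => ?_
    rw [pow_succ] at hz
    refine Submodule.mul_induction_on hz (fun y hy x hx => ?_) fun u v hu hv => ?_
    · rw [mul_comm, mul_smul]
      refine h (y • m) (fun w hw => ?_) x hx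
      rw [← mul_smul, mul_comm]
      apply hm
      rw [add_assoc, pow_add]
      exact Ideal.mul_mem_mul hy hw
    · rw [add_smul, hu, hv, add_zero]

theorem stmt0 {A : Type*} [CommRing A] (a : Ideal A)
    (M : Type*) [AddCommGroup M] [Module A M] :
    IsAReducedIdeal a M ↔ ∀ m ∈ torsionGamma a M, ∀ x ∈ a, x • m = 0 := by
  constructor
  · intro h m hm x hx
    have hle : torsionGamma a M ≤ Submodule.torsionBySet A M (a : Set A) := by
      refine iSup_le fun k n hn => ?_
      rw [Submodule.mem_torsionBySet_iff] at hn ⊢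
      exact fun y => h.smul_eq_zero_of_pow k (fun z hz => hn ⟨z, hz⟩) y y.2
    exact (Submodule.mem_torsionBySet_iff _ _).1 (hle hm) ⟨x, hx⟩
  · intro h m hm
    refine h m (Submodule.mem_iSup_of_mem 1 ?_)
    exact (Submodule.mem_torsionBySet_iff _ _).2 fun y => hm y y.2
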